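/- Let n ≥ 2 and let Σ be a nonempty family of hyperplanes of PG(2n+1,q) satisfying property (P1^−). Then |Σ| = q^n(q^{n+1} + 1); consequently the number of black points is (q^{n+1}+1)(q^n−1)/(q−1), and every hyperplane of Σ contains exactly (q^{2n}−1)/(q−1) black points. -/

import Mathlib

/-!
Double counting of incident pairs `(p, π)` and triples `(p, π, σ)` with `π`, `σ` in the family
gives the first two moments of the number of family members through a point.  As this number takes
only two values, the size `s` of the family is a root of an explicit quadratic.  Put `x = q ^ n`.
Under (P1⁻) the quadratic has the roots `x * (q * x + 1)` and `x ^ 2 * (q * x - 1) / (x - 1)`.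
Modulo `x - 1` the last numerator is `q - 1`, which lies strictly between `0` and `x - 1` when
`n ≥ 2`, so the second root is not an integer.  The number of black points in the whole space or
in a hyperplane of the family is then read off the corresponding first moment.
-/

namespace PG

open Module Finset

theorem sum_natCast_of_two_values {ι : Type*} {P : Finset ι} {f : ι → ℕ} {a b : ℕ}
    (hab : ∀ i ∈ P, f i = a ∨ f i = b) :
    ∑ i ∈ P, (f i : ℤ) = b * #P + (a - b) * #{i ∈ P | f i = a} := by
  have hf : ∀ i ∈ P, (f i : ℤ) = b + (a - b) * if f i = a then 1 else 0 := fun i hi => by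
    split_ifs with ha
    · rw [ha]; ring
    · rw [(hab i hi).resolve_left ha]; ring
  rw [sum_congr rfl hf, sum_add_distrib, sum_const, nsmul_eq_mul, ← mul_sum, sum_boole]
  ring

theorem finrank_inf_of_ne {K V : Type*} [DivisionRing K] [AddCommGroup V] [Module K V] {d : ℕ}
    (hV : finrank K V = d + 2) {A B : Submodule K V}
    (hA : finrank K A = d + 1) (hB : finrank K B = d + 1) (hAB : A ≠ B) :
    finrank K (A ⊓ B : Submodule K V) = d := by
  have : FiniteDimensional K V := .of_finrank_pos (by lia)
  have hlt : A < A ⊔ B := left_lt_sup.2 fun hBA =>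
    hAB (Submodule.eq_of_le_of_finrank_eq hBA (hB.trans hA.symm)).symm
  have hsup := Submodule.finrank_lt_finrank_of_lt hlt
  have hle := Submodule.finrank_le (A ⊔ B)
  have hsum := Submodule.finrank_sup_add_finrank_inf_eq A B
  lia

section Counting

variable {F V : Type*} [Field F] [AddCommGroup V] [Module F V] [Finite V]

/-- The set of points of the projective space of `V` (that is, the one-dimensional subspaces of
`V`) that lie in the subspace `U`; it is the set of all points when `U = ⊤`. -/
noncomputable def points (U : Submodule F V) : Finset (Submodule F V) :=
  {p : Submodule F V | finrank F p = 1 ∧ p ≤ U}.toFinite.toFinset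

@[simp]
theorem mem_points {U p : Submodule F V} : p ∈ points U ↔ finrank F p = 1 ∧ p ≤ U := by
  simp [points]

open Classical in
theorem filter_le_points (U W : Submodule F V) : {p ∈ points U | p ≤ W} = points (U ⊓ W) := by
  ext p
  simp [and_assoc]

theorem card_points_eq_natCard_projectivization (U : Submodule F V) :
    #(points U) = Nat.card (Projectivization F U) := by
  have e : {p : Set.Iic U // finrank F p = 1} ≃ points U :=
    (Equiv.subtypeSubtypeEquivSubtypeInter (· ≤ U) (finrank F · = 1)).trans
      (Equiv.subtypeEquivRight fun p => by simp [and_comm])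
  have e' : {p : Submodule F U // finrank F p = 1} ≃ {p : Set.Iic U // finrank F p = 1} :=
    U.mapIic.toEquiv.subtypeEquiv fun p => by
      rw [RelIso.coe_fn_toEquiv, Submodule.coe_mapIic_apply, Submodule.finrank_map_subtype_eq]
  rw [Nat.card_congr (((Projectivization.equivSubmodule F U).trans e').trans e),
    Nat.card_eq_fintype_card, Fintype.card_coe]

theorem card_sub_one_mul_card_points [Finite F] (U : Submodule F V) :
    ((Nat.card F : ℤ) - 1) * #(points U) = (Nat.card F : ℤ) ^ finrank F U - 1 := by
  rw [card_points_eq_natCard_projectivization, Projectivization.card_of_finrank F U rfl]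
  push_cast
  exact mul_geom_sum _ _

open Classical in
/-- The number of members of the family `S` of subspaces that contain the point `p`. -/
noncomputable def degree (S : Finset (Submodule F V)) (p : Submodule F V) : ℕ :=
  #{π ∈ S | p ≤ π}

variable {S : Finset (Submodule F V)}

omit [Finite V] in
theorem ncard_setOf_mem_and_le (p : Submodule F V) :
    {π | π ∈ S ∧ p ≤ π}.ncard = degree S p := by
  rw [degree, ← Set.ncard_coe_finset, coe_filter]

theorem sum_degree (U : Submodule F V) :
    ∑ p ∈ points U, degree S p = ∑ π ∈ S, #(points (U ⊓ π)) := by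
  classical
  simp only [← filter_le_points]
  exact sum_card_bipartiteAbove_eq_sum_card_bipartiteBelow (· ≤ ·)

theorem sum_degree_sq (U : Submodule F V) :
    ∑ p ∈ points U, degree S p ^ 2 = ∑ π ∈ S, ∑ p ∈ points (U ⊓ π), degree S p := by
  classical
  simp only [← filter_le_points, sum_filter]
  rw [sum_comm]
  refine sum_congr rfl fun p _ => ?_
  rw [← sum_filter, sum_const, smul_eq_mul, sq, degree]

section Hyperplanes

variable [Finite F] {d : ℕ}

local notation "q" => (Nat.card F : ℤ)

theorem card_sub_one_mul_sum_degree (hS : ∀ π ∈ S, finrank F π = d + 1) :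
    (q - 1) * ∑ p ∈ points (⊤ : Submodule F V), (degree S p : ℤ) = #S * (q ^ (d + 1) - 1) := by
  have hpoints : ∀ π ∈ S, (q - 1) * #(points (⊤ ⊓ π)) = q ^ (d + 1) - 1 := fun π hπ => by
    rw [top_inf_eq, card_sub_one_mul_card_points, hS π hπ]
  rw [← Nat.cast_sum, sum_degree, Nat.cast_sum, mul_sum, sum_congr rfl hpoints, sum_const,
    nsmul_eq_mul]

variable (hV : finrank F V = d + 2) (hS : ∀ π ∈ S, finrank F π = d + 1)
include hV hS

theorem card_sub_one_mul_sum_degree_of_mem {π : Submodule F V} (hπ : π ∈ S) :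
    (q - 1) * ∑ p ∈ points π, (degree S p : ℤ) =
      q ^ (d + 1) - 1 + (#S - 1) * (q ^ d - 1) := by
  classical
  have hself : (q - 1) * #(points (π ⊓ π)) = q ^ (d + 1) - 1 := by
    rw [inf_idem, card_sub_one_mul_card_points, hS π hπ]
  have hother : ∀ σ ∈ S.erase π, (q - 1) * #(points (π ⊓ σ)) = q ^ d - 1 := fun σ hσ => by
    obtain ⟨hne, hσS⟩ := mem_erase.1 hσ
    rw [card_sub_one_mul_card_points, finrank_inf_of_ne hV (hS π hπ) (hS σ hσS) hne.symm]
  rw [← Nat.cast_sum, sum_degree, Nat.cast_sum, mul_sum, ← add_sum_erase _ _ hπ, hself,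
    sum_congr rfl hother, sum_const, nsmul_eq_mul, cast_card_erase_of_mem hπ]

theorem card_sub_one_mul_sum_degree_sq :
    (q - 1) * ∑ p ∈ points (⊤ : Submodule F V), (degree S p : ℤ) ^ 2 =
      #S * (q ^ (d + 1) - 1 + (#S - 1) * (q ^ d - 1)) := by
  have hsq : ∑ p ∈ points (⊤ : Submodule F V), (degree S p : ℤ) ^ 2 =
      ∑ π ∈ S, ∑ p ∈ points π, (degree S p : ℤ) := by
    have h := sum_degree_sq (S := S) ⊤
    simp only [top_inf_eq] at h
    exact_mod_cast h
  rw [hsq, mul_sum, sum_congr rfl fun π => card_sub_one_mul_sum_degree_of_mem hV hS,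
    sum_const, nsmul_eq_mul]

theorem card_family_quadratic {a b : ℕ}
    (hab : ∀ p ∈ points (⊤ : Submodule F V), degree S p = a ∨ degree S p = b) :
    #S * (q ^ (d + 1) - 1 + (#S - 1) * (q ^ d - 1)) - (a + b) * (#S * (q ^ (d + 1) - 1)) +
      a * b * (q ^ (d + 2) - 1) = 0 := by
  have hvanish : ∑ p ∈ points (⊤ : Submodule F V),
      ((degree S p : ℤ) ^ 2 - (a + b) * degree S p + a * b) = 0 :=
    sum_eq_zero fun p hp => by rcases hab p hp with h | h <;> rw [h] <;> ring
  rw [sum_add_distrib, sum_sub_distrib, ← mul_sum, sum_const, nsmul_eq_mul] at hvanish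
  have hcard := card_sub_one_mul_card_points (⊤ : Submodule F V)
  rw [finrank_top, hV] at hcard
  rw [← card_sub_one_mul_sum_degree_sq hV hS, ← card_sub_one_mul_sum_degree hS, ← hcard]
  linear_combination (q - 1) * hvanish

end Hyperplanes

/-- Property (P1⁻) for a family `S` of subspaces of `V`, with `q = Nat.card F`: the number of
members of `S` through a point takes only the values `q ^ n * (q ^ n + 1)` (the point is black) and
`q ^ (2 * n)` (the point is white). -/
def PropertyP1Minus (n : ℕ) (S : Finset (Submodule F V)) : Prop :=
  ∀ p ∈ points (⊤ : Submodule F V),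
    degree S p = Nat.card F ^ n * (Nat.card F ^ n + 1) ∨ degree S p = Nat.card F ^ (2 * n)

/-- The points of the subspace `U` that are black for the family `S`, in the sense of property
(P1⁻) with parameter `n`. -/
noncomputable def blackPoints (n : ℕ) (S : Finset (Submodule F V)) (U : Submodule F V) :
    Finset (Submodule F V) :=
  {p ∈ points U | degree S p = Nat.card F ^ n * (Nat.card F ^ n + 1)}

theorem ncard_setOf_black (n : ℕ) (U : Submodule F V) :
    {p : Submodule F V | finrank F p = 1 ∧
      degree S p = Nat.card F ^ n * (Nat.card F ^ n + 1) ∧ p ≤ U}.ncard =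
        #(blackPoints n S U) := by
  rw [← Set.ncard_coe_finset]
  congr 1
  ext p
  simp only [blackPoints, Set.mem_ofPred_eq, coe_filter, mem_points]
  tauto

theorem PropertyP1Minus.sum_degree {n : ℕ} (hP1 : PropertyP1Minus n S) (U : Submodule F V) :
    ∑ p ∈ points U, (degree S p : ℤ) =
      Nat.card F ^ n * (Nat.card F ^ n * #(points U) + #(blackPoints n S U)) := by
  have hab : ∀ p ∈ points U, degree S p = Nat.card F ^ n * (Nat.card F ^ n + 1) ∨
      degree S p = Nat.card F ^ (2 * n) := fun p hp =>
    hP1 p (mem_points.2 ⟨(mem_points.1 hp).1, le_top⟩)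
  rw [sum_natCast_of_two_values hab, ← blackPoints]
  push_cast
  ring

theorem eq_mul_of_quadratic_eq_zero {q x s : ℤ} (hq : 1 < q) (hx : q < x)
    (h : s * (q * x ^ 2 - 1 + (s - 1) * (x ^ 2 - 1)) -
      (x * (x + 1) + x ^ 2) * (s * (q * x ^ 2 - 1)) +
      x * (x + 1) * x ^ 2 * (q ^ 2 * x ^ 2 - 1) = 0) :
    s = x * (q * x + 1) := by
  have hfactor : (x + 1) * (s - x * (q * x + 1)) * ((x - 1) * s - x ^ 2 * (q * x - 1)) = 0 := by
    linear_combination h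
  have hleft : x + 1 ≠ 0 := by lia
  have hright : (x - 1) * s - x ^ 2 * (q * x - 1) ≠ 0 := fun h0 => by
    have hdvd : x - 1 ∣ q - 1 :=
      ⟨s - q * x ^ 2 - (q - 1) * (x + 1), by linear_combination -h0⟩
    have hle := Int.le_of_dvd (by lia) hdvd
    lia
  simpa [hleft, hright, sub_eq_zero] using hfactor

namespace PropertyP1Minus

variable [Finite F] {n : ℕ} (hn : 2 ≤ n) (hV : finrank F V = 2 * n + 2)
  (hS : ∀ π ∈ S, finrank F π = 2 * n + 1) (hP1 : PropertyP1Minus n S)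
include hn hV hS hP1

theorem card_family : #S = Nat.card F ^ n * (Nat.card F ^ (n + 1) + 1) := by
  have hq : 1 < Nat.card F := Finite.one_lt_card
  have hquad := card_family_quadratic hV hS hP1
  push_cast at hquad
  zify
  rw [pow_succ']
  refine eq_mul_of_quadratic_eq_zero (mod_cast hq) (mod_cast lt_self_pow₀ hq hn) ?_
  linear_combination hquad

theorem card_sub_one_mul_card_blackPoints :
    (Nat.card F - 1) * #(blackPoints n S ⊤) =
      (Nat.card F ^ (n + 1) + 1) * (Nat.card F ^ n - 1) := by
  have hsum := card_sub_one_mul_sum_degree hS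
  have hcard := card_sub_one_mul_card_points (⊤ : Submodule F V)
  rw [hP1.sum_degree, hP1.card_family hn hV hS] at hsum
  rw [finrank_top, hV] at hcard
  push_cast at hsum
  have hx : (Nat.card F : ℤ) ^ n ≠ 0 := by simp [Nat.card_pos.ne']
  zify [Nat.one_le_pow n _ (Nat.card_pos (α := F)), Nat.card_pos (α := F)]
  apply mul_left_cancel₀ hx
  linear_combination hsum - Nat.card F ^ (2 * n) * hcard

theorem card_sub_one_mul_card_blackPoints_of_mem {π : Submodule F V} (hπ : π ∈ S) :
    (Nat.card F - 1) * #(blackPoints n S π) = Nat.card F ^ (2 * n) - 1 := by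
  have hsum := card_sub_one_mul_sum_degree_of_mem hV hS hπ
  have hcard := card_sub_one_mul_card_points π
  rw [hP1.sum_degree, hP1.card_family hn hV hS] at hsum
  rw [hS π hπ] at hcard
  push_cast at hsum
  have hx : (Nat.card F : ℤ) ^ n ≠ 0 := by simp [Nat.card_pos.ne']
  zify [Nat.one_le_pow (2 * n) _ (Nat.card_pos (α := F)), Nat.card_pos (α := F)]
  apply mul_left_cancel₀ hx
  linear_combination hsum - Nat.card F ^ (2 * n) * hcard

end PropertyP1Minus

end Counting

end PG

open PG in
theorem stmt_15_general {F V : Type*} [Field F] [Finite F] [AddCommGroup V] [Module F V]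
    {n q : ℕ} (hn : 2 ≤ n) (hq : Nat.card F = q) (hV : Module.finrank F V = 2 * n + 2)
    (S : Set (Submodule F V)) (hS : ∀ π ∈ S, Module.finrank F π = 2 * n + 1)
    (hP1 : ∀ p : Submodule F V, Module.finrank F p = 1 →
      {π ∈ S | p ≤ π}.ncard = q ^ n * (q ^ n + 1) ∨ {π ∈ S | p ≤ π}.ncard = q ^ (2 * n)) :
    S.ncard = q ^ n * (q ^ (n + 1) + 1) ∧
    {p : Submodule F V | Module.finrank F p = 1 ∧
      {π ∈ S | p ≤ π}.ncard = q ^ n * (q ^ n + 1)}.ncard =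
        (q ^ (n + 1) + 1) * (q ^ n - 1) / (q - 1) ∧
    ∀ π ∈ S,
      {p : Submodule F V | Module.finrank F p = 1 ∧
        {σ ∈ S | p ≤ σ}.ncard = q ^ n * (q ^ n + 1) ∧ p ≤ π}.ncard =
          (q ^ (2 * n) - 1) / (q - 1) := by
  subst hq
  have : FiniteDimensional F V := .of_finrank_pos (by lia)
  have : Finite V := Module.finite_of_finite F
  have hq : Nat.card F - 1 ≠ 0 := by have := Finite.one_lt_card (α := F); lia
  lift S to Finset (Submodule F V) using S.toFinite
  simp only [Finset.mem_coe, ncard_setOf_mem_and_le, Set.ncard_coe_finset] at hS hP1 ⊢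
  have hP1' : PropertyP1Minus n S := fun p hp => hP1 p (mem_points.1 hp).1
  refine ⟨hP1'.card_family hn hV hS, Nat.eq_div_of_mul_eq_right hq ?_,
    fun π hπ => Nat.eq_div_of_mul_eq_right hq ?_⟩
  · rw [← hP1'.card_sub_one_mul_card_blackPoints hn hV hS, ← ncard_setOf_black]
    simp only [le_top, and_true]
  · rw [ncard_setOf_black, hP1'.card_sub_one_mul_card_blackPoints_of_mem hn hV hS hπ]

/-- For `n ≥ 2` and a nonempty family `S` of hyperplanes of `PG(2n+1,q)`
satisfying (P1⁻): `|S| = q^n(q^{n+1}+1)`, the number of black points is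
`(q^{n+1}+1)(q^n-1)/(q-1)`, and every hyperplane of `S` contains exactly `(q^{2n}-1)/(q-1)`
black points. -/
theorem stmt_15 (n : ℕ) (hn : 2 ≤ n)
    (F : Type) [Field F] [Fintype F] (q : ℕ) (hq : Fintype.card F = q)
    (S : Set (Submodule F (Fin (2*n+2) → F)))
    (hS : S.Nonempty)
    (hhyp : ∀ π ∈ S, Module.finrank F π = 2*n+1)
    (hP1 : ∀ p : Submodule F (Fin (2*n+2) → F), Module.finrank F p = 1 →
      {π ∈ S | p ≤ π}.ncard = q^n * (q^n + 1) ∨ {π ∈ S | p ≤ π}.ncard = q^(2*n)) :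
    S.ncard = q^n * (q^(n+1) + 1) ∧
    {p : Submodule F (Fin (2*n+2) → F) | Module.finrank F p = 1 ∧
      {π ∈ S | p ≤ π}.ncard = q^n * (q^n + 1)}.ncard = (q^(n+1) + 1) * (q^n - 1) / (q - 1) ∧
    ∀ π ∈ S,
      {p : Submodule F (Fin (2*n+2) → F) | Module.finrank F p = 1 ∧
        {σ ∈ S | p ≤ σ}.ncard = q^n * (q^n + 1) ∧ p ≤ π}.ncard = (q^(2*n) - 1)/(q - 1) := by
  exact stmt_15_general hn (Nat.card_eq_fintype_card.trans hq) (by simp) S hhyp hP1
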